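/- arXiv:1605.08310 — 2 statements merged into one kernel-verified Lean document; each statement's English description precedes it below -/
import Mathlib

section
/- For every quasi-poset P on [n] there exists a unique polynomial ehr_P ∈ ℚ[X] such that for every integer k ≥ 0, ehr_P(k) equals the number of functions f : Fin n → Fin k with the property that i ≤_P j implies f(i) ≤ f(j). Moreover, if n ≥ 1, then ehr_P(X) = Σ_{i=1}^{n} #W_P(i) · H_i(X), where H_i(X) = X(X-1)⋯(X-i+1)/i! is the i-th Hilbert (binomial coefficient) polynomial. -/
open Polynomial

/-- Number of monotone maps `Fin n → Fin k` for the quasi-poset `le` (the set `L_P(k)`). -/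
noncomputable def LCount {n : ℕ} (le : Fin n → Fin n → Prop) (k : ℕ) : ℕ :=
  Nat.card {f : Fin n → Fin k // ∀ i j, le i j → f i ≤ f j}

/-- Number of surjective monotone maps `Fin n → Fin k` (the set `W_P(k)`). -/
noncomputable def WCount {n : ℕ} (le : Fin n → Fin n → Prop) (k : ℕ) : ℕ :=
  Nat.card {f : Fin n → Fin k //
    Function.Surjective f ∧ ∀ i j, le i j → f i ≤ f j}

/-- The `i`-th Hilbert polynomial `H_i(X) = X(X-1)⋯(X-i+1)/i!`. -/
noncomputable def Hilb (i : ℕ) : ℚ[X] :=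
  Polynomial.C ((i.factorial : ℚ)⁻¹) * descPochhammer ℚ i

/-!
A monotone map is determined by its image `S` together with a monotone surjection onto
`Fin S.card`, because a finite chain has a unique increasing enumeration. Sorting the monotone maps
into `Fin k` by their images therefore gives `#L_P(k) = ∑ i, (k choose i) * #W_P(i)`, and the right
side is the value at `k` of a polynomial in the Hilbert basis. A polynomial is determined by its
values at the natural numbers, so no other one takes these values.
-/

theorem Hilb_eval_natCast (i k : ℕ) : (Hilb i).eval (k : ℚ) = k.choose i := by
  rw [Hilb, eval_mul, eval_C, Nat.cast_choose_eq_descPochhammer_div, div_eq_inv_mul]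

theorem polynomial_eq_of_eval_natCast_eq {R : Type*} [CommRing R] [IsDomain R] [CharZero R]
    {p q : R[X]} (h : ∀ k : ℕ, p.eval (k : R) = q.eval (k : R)) : p = q :=
  eq_of_infinite_eval_eq p q <|
    (Set.infinite_range_of_injective Nat.cast_injective).mono (Set.range_subset_iff.2 h)

section MonotoneMaps

variable {α β γ : Type*} (r : α → α → Prop)

/-- The maps `α → β` that send `r` to `≤`. For a quasi-poset `r` on `Fin n` and `β = Fin k` this
is the set `L_P(k)`. -/
def monotoneMaps (β : Type*) [LE β] : Set (α → β) :=
  {f | ∀ i j, r i j → f i ≤ f j}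

/-- The surjective maps `α → β` that send `r` to `≤`. For a quasi-poset `r` on `Fin n` and
`β = Fin k` this is the set `W_P(k)`. -/
def monotoneSurjections (β : Type*) [LE β] : Set (α → β) :=
  {f | Function.Surjective f ∧ f ∈ monotoneMaps r β}

theorem image_comp_monotoneSurjections [Preorder β] [Preorder γ] (e : γ ↪o β) :
    (fun g ↦ e ∘ g) '' monotoneSurjections r γ =
      {f ∈ monotoneMaps r β | Set.range f = Set.range e} := by
  ext f
  constructor
  · rintro ⟨g, ⟨hsurj, hmono⟩, rfl⟩
    exact ⟨fun i j hij ↦ e.monotone (hmono i j hij), hsurj.range_comp e⟩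
  · rintro ⟨hmono, hrange⟩
    obtain ⟨g, rfl⟩ : ∃ g : α → γ, e ∘ g = f :=
      Set.range_subset_range_iff_exists_comp.1 hrange.le |>.imp fun _ h ↦ h.symm
    refine ⟨g, ⟨?_, fun i j hij ↦ e.le_iff_le.1 (hmono i j hij)⟩, rfl⟩
    rw [Set.range_comp] at hrange
    rw [← Set.range_eq_univ, ← e.injective.image_injective.eq_iff, hrange, Set.image_univ]

theorem ncard_monotoneMaps_range_eq [LinearOrder β] (S : Finset β) :
    {f ∈ monotoneMaps r β | Set.range f = S}.ncard =
      (monotoneSurjections r (Fin S.card)).ncard := by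
  rw [← S.range_orderEmbOfFin rfl, ← image_comp_monotoneSurjections,
    Set.ncard_image_of_injective _ (S.orderEmbOfFin rfl).injective.comp_left]

theorem ncard_monotoneMaps_eq_sum_finset [Finite α] [LinearOrder β] [Fintype β] :
    (monotoneMaps r β).ncard =
      ∑ S : Finset β, (monotoneSurjections r (Fin S.card)).ncard := by
  classical
  have := Fintype.ofFinite α
  rw [Set.ncard_eq_toFinset_card', Finset.card_eq_sum_card_fiberwise
    (f := fun f ↦ Finset.univ.image f) (t := Finset.univ) fun _ _ ↦ Finset.mem_univ _]
  refine Finset.sum_congr rfl fun S _ ↦ ?_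
  rw [← ncard_monotoneMaps_range_eq, ← Set.ncard_coe_finset]
  congr 1
  ext f
  simp [← Finset.coe_inj]

theorem ncard_monotoneSurjections_eq_zero_of_card_lt [Finite α] [LE β]
    (h : Nat.card α < Nat.card β) : (monotoneSurjections r β).ncard = 0 := by
  have hempty : monotoneSurjections r β = ∅ :=
    Set.eq_empty_of_forall_notMem fun f hf ↦ (Nat.card_le_card_of_surjective f hf.1).not_gt h
  rw [hempty, Set.ncard_empty]

theorem ncard_monotoneMaps_eq_sum_choose [Finite α] [LinearOrder β] [Finite β] :
    (monotoneMaps r β).ncard = ∑ i ∈ Finset.range (Nat.card α + 1),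
      (Nat.card β).choose i * (monotoneSurjections r (Fin i)).ncard := by
  have := Fintype.ofFinite β
  rw [ncard_monotoneMaps_eq_sum_finset, ← Finset.powerset_univ,
    Finset.sum_powerset_apply_card fun i ↦ (monotoneSurjections r (Fin i)).ncard,
    Finset.card_univ, ← Nat.card_eq_fintype_card]
  refine Finset.sum_congr_of_eq_on_inter (fun i _ hi ↦ ?_) (fun i _ hi ↦ ?_) fun _ _ _ ↦ rfl
  · rw [ncard_monotoneSurjections_eq_zero_of_card_lt r (by simpa using hi), smul_zero]
  · rw [Nat.choose_eq_zero_of_lt (by simpa using hi), zero_mul]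

/-- The Ehrhart polynomial `ehr_P` of a relation on a finite type, defined by its expansion in the
Hilbert basis. The term `i = 0` matters only when `α` is empty. -/
noncomputable def ehrhartPolynomial : ℚ[X] :=
  ∑ i ∈ Finset.range (Nat.card α + 1), ((monotoneSurjections r (Fin i)).ncard : ℚ) • Hilb i

theorem ehrhartPolynomial_eval_natCast [Finite α] (k : ℕ) :
    (ehrhartPolynomial r).eval (k : ℚ) = (monotoneMaps r (Fin k)).ncard := by
  simp only [ehrhartPolynomial, eval_finsetSum, eval_smul, Hilb_eval_natCast, smul_eq_mul,
    ncard_monotoneMaps_eq_sum_choose, Nat.card_fin, Nat.cast_sum, Nat.cast_mul, mul_comm]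

theorem ehrhartPolynomial_eq_sum_Icc [Nonempty α] :
    ehrhartPolynomial r = ∑ i ∈ Finset.Icc 1 (Nat.card α),
      ((monotoneSurjections r (Fin i)).ncard : ℚ) • Hilb i := by
  have hzero : (monotoneSurjections r (Fin 0)).ncard = 0 := by
    rw [Set.eq_empty_of_isEmpty (monotoneSurjections r (Fin 0)), Set.ncard_empty]
  rw [ehrhartPolynomial, Finset.sum_range_eq_add_Ico _ (Nat.add_one_pos _), hzero, Nat.cast_zero,
    zero_smul, zero_add, Finset.Ico_add_one_right_eq_Icc]

end MonotoneMaps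

theorem LCount_eq_ncard_monotoneMaps {n : ℕ} (le : Fin n → Fin n → Prop) (k : ℕ) :
    LCount le k = (monotoneMaps le (Fin k)).ncard :=
  rfl

theorem WCount_eq_ncard_monotoneSurjections {n : ℕ} (le : Fin n → Fin n → Prop) (k : ℕ) :
    WCount le k = (monotoneSurjections le (Fin k)).ncard :=
  rfl

theorem ehr_exists_unique_general {α : Type*} [Finite α] (r : α → α → Prop) :
    (∃! p : ℚ[X], ∀ k : ℕ, p.eval (k : ℚ) = (monotoneMaps r (Fin k)).ncard) ∧
    (Nonempty α → ∀ p : ℚ[X], (∀ k : ℕ, p.eval (k : ℚ) = (monotoneMaps r (Fin k)).ncard) →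
      p = ∑ i ∈ Finset.Icc 1 (Nat.card α),
        ((monotoneSurjections r (Fin i)).ncard : ℚ) • Hilb i) := by
  have huniq (p : ℚ[X]) (hp : ∀ k : ℕ, p.eval (k : ℚ) = (monotoneMaps r (Fin k)).ncard) :
      p = ehrhartPolynomial r :=
    polynomial_eq_of_eval_natCast_eq fun k ↦ by rw [hp, ehrhartPolynomial_eval_natCast]
  exact ⟨⟨ehrhartPolynomial r, ehrhartPolynomial_eval_natCast r, huniq⟩,
    fun _ p hp ↦ (huniq p hp).trans (ehrhartPolynomial_eq_sum_Icc r)⟩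

/-- Existence and uniqueness of the Ehrhart polynomial `ehr_P`, and its expansion
in the Hilbert basis. -/
theorem ehr_exists_unique {n : ℕ} (le : Fin n → Fin n → Prop)
    (hrefl : ∀ i, le i i)
    (htrans : ∀ i j k, le i j → le j k → le i k) :
    (∃! p : ℚ[X], ∀ k : ℕ, p.eval (k : ℚ) = LCount le k) ∧
    (1 ≤ n → ∀ p : ℚ[X], (∀ k : ℕ, p.eval (k : ℚ) = LCount le k) →
      p = ∑ i ∈ Finset.Icc 1 n, (WCount le i : ℚ) • Hilb i) := by
  simpa only [LCount_eq_ncard_monotoneMaps, WCount_eq_ncard_monotoneSurjections, Nat.card_fin,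
    ← Fin.pos_iff_nonempty, Nat.one_le_iff_ne_zero, Nat.pos_iff_ne_zero]
    using ehr_exists_unique_general le
end

section
/- Recursive computation of ehr^str: Let P be a quasi-poset on [n] with n ≥ 1. Then for every integer m ≥ 1: ehr^str_P(m) = Σ_{k=0}^{m-1} Σ_{O ∈ top(P), O ≠ ∅, P|O discrete} ehr^str_{P|(Fin n ∖ O)}(k), where the inner sum ranges over all nonempty open sets O of P whose restriction P|O is discrete. -/
open Polynomial

/-- Number of elements of `L^str_P(k)` for the quasi-poset `le`. -/
noncomputable def LstrCount {n : ℕ} (le : Fin n → Fin n → Prop) (k : ℕ) : ℕ :=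
  Nat.card {f : Fin n → Fin k //
    (∀ i j, le i j → f i ≤ f j) ∧ (∀ i j, le i j → f i = f j → le j i)}

/-- Number of elements of `L^str(k)` for the restriction of `le` to `B`. -/
noncomputable def LstrCountOn {n : ℕ} (le : Fin n → Fin n → Prop) (B : Set (Fin n))
    (k : ℕ) : ℕ :=
  Nat.card {f : B → Fin k //
    (∀ i j : B, le i.1 j.1 → f i ≤ f j) ∧
    (∀ i j : B, le i.1 j.1 → f i = f j → le j.1 i.1)}

/-!
The points of `P` labelled by the largest value `m` of a strict labelling form an open set `O`, and
`P|O` is discrete because the labelling is constant there. Conversely, a strict labelling of the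
complement of such an `O` by smaller values extends by `m` on `O`. Hence
`ehr^str_P(m + 1) = Σ_O ehr^str_{P|Oᶜ}(m)`; the empty `O` contributes `ehr^str_P(m)`, and the
recursion is obtained by telescoping.
-/

/-- Membership in `L^str_P`, for an arbitrary relation `r` on any type in place of the quasi-poset
`P`, and with labels in any ordered type. -/
def IsStrictLabeling {α β : Type*} [LE β] (r : α → α → Prop) (f : α → β) : Prop :=
  (∀ i j, r i j → f i ≤ f j) ∧ (∀ i j, r i j → f i = f j → r j i)

/-- The value `ehr^str_r(k)` for an arbitrary relation `r`. The restriction `r|B` is encoded as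
`Subrel r (· ∈ B)`. -/
noncomputable def strictLabelingCount {α : Type*} (r : α → α → Prop) (k : ℕ) : ℕ :=
  Nat.card {f : α → Fin k // IsStrictLabeling r f}

/-- The open sets `O` of `r` such that `r|O` is discrete; the empty set is allowed. -/
def IsDiscreteOpen {α : Type*} (r : α → α → Prop) (O : Set α) : Prop :=
  (∀ i ∈ O, ∀ j, r i j → j ∈ O) ∧ (∀ i ∈ O, ∀ j ∈ O, r i j → r j i)

open Classical in
/-- Extension of a labelling of `Oᶜ` by the new largest label on `O`. -/
noncomputable def extendLast {α : Type*} {m : ℕ} (O : Set α) (g : ↥Oᶜ → Fin m) :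
    α → Fin (m + 1) :=
  fun i ↦ if h : i ∈ O then Fin.last m else (g ⟨i, h⟩).castSucc

section

variable {α : Type*} {r : α → α → Prop} {m : ℕ}

theorem isDiscreteOpen_empty : IsDiscreteOpen r ∅ := by
  simp [IsDiscreteOpen]

theorem IsStrictLabeling.isDiscreteOpen_preimage_of_isMax {β : Type*} [PartialOrder β]
    {f : α → β} {a : β} (hf : IsStrictLabeling r f) (ha : IsMax a) :
    IsDiscreteOpen r (f ⁻¹' {a}) := by
  refine ⟨?_, fun i hi j hj hij ↦ hf.2 i j hij (hi.trans hj.symm)⟩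
  rintro i rfl j hij
  exact (ha.eq_of_le (hf.1 i j hij)).symm

theorem IsStrictLabeling.comp_relEmbedding {α' β : Type*} [LE β] {s : α' → α' → Prop} {f : α → β}
    (hf : IsStrictLabeling r f) (e : s ↪r r) : IsStrictLabeling s (f ∘ e) :=
  ⟨fun _ _ hij ↦ hf.1 _ _ (e.map_rel_iff.2 hij),
    fun _ _ hij h ↦ e.map_rel_iff.1 (hf.2 _ _ (e.map_rel_iff.2 hij) h)⟩

theorem extendLast_of_mem {O : Set α} (g : ↥Oᶜ → Fin m) {i : α} (hi : i ∈ O) :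
    extendLast O g i = Fin.last m :=
  dif_pos hi

theorem extendLast_of_notMem {O : Set α} (g : ↥Oᶜ → Fin m) {i : α} (hi : i ∉ O) :
    extendLast O g i = (g ⟨i, hi⟩).castSucc :=
  dif_neg hi

theorem preimage_last_extendLast (O : Set α) (g : ↥Oᶜ → Fin m) :
    extendLast O g ⁻¹' {Fin.last m} = O := by
  ext i
  by_cases hi : i ∈ O
  · simp [extendLast_of_mem g hi, hi]
  · simp [extendLast_of_notMem g hi, hi]

theorem extendLast_injective (O : Set α) :
    Function.Injective (extendLast O : (↥Oᶜ → Fin m) → α → Fin (m + 1)) := by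
  intro g g' h
  funext i
  have hi := congrFun h i
  rw [extendLast_of_notMem g i.2, extendLast_of_notMem g' i.2] at hi
  exact Fin.castSucc_injective m hi

theorem exists_extendLast_eq (f : α → Fin (m + 1)) :
    ∃ (O : Set α) (g : ↥Oᶜ → Fin m), extendLast O g = f := by
  refine ⟨f ⁻¹' {Fin.last m}, fun i ↦ (f i).castPred i.2, funext fun i ↦ ?_⟩
  by_cases hi : i ∈ f ⁻¹' {Fin.last m}
  · exact (extendLast_of_mem _ hi).trans hi.symm
  · exact (extendLast_of_notMem _ hi).trans (Fin.castSucc_castPred (f i) hi)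

theorem isStrictLabeling_extendLast_iff {O : Set α} {g : ↥Oᶜ → Fin m} :
    IsStrictLabeling r (extendLast O g) ↔
      IsDiscreteOpen r O ∧ IsStrictLabeling (Subrel r (· ∈ Oᶜ)) g := by
  constructor
  · intro hf
    refine ⟨preimage_last_extendLast O g ▸ hf.isDiscreteOpen_preimage_of_isMax isMax_top,
      fun i j hij ↦ ?_, fun i j hij hg ↦ hf.2 i j hij ?_⟩
    · have hle := hf.1 i j hij
      rwa [extendLast_of_notMem g i.2, extendLast_of_notMem g j.2,
        Fin.castSucc_le_castSucc_iff] at hle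
    · rw [extendLast_of_notMem g i.2, extendLast_of_notMem g j.2, hg]
  · rintro ⟨⟨hopen, hdiscrete⟩, hle, heq⟩
    refine ⟨fun i j hij ↦ ?_, fun i j hij hf ↦ ?_⟩
    · by_cases hj : j ∈ O
      · exact extendLast_of_mem g hj ▸ Fin.le_last _
      have hi : i ∉ O := fun hi ↦ hj (hopen i hi j hij)
      simpa [extendLast_of_notMem g, hi, hj] using hle ⟨i, hi⟩ ⟨j, hj⟩ hij
    · by_cases hi : i ∈ O
      · exact hdiscrete i hi j (hopen i hi j hij) hij
      have hj : j ∉ O := fun hj ↦ by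
        simp [extendLast_of_mem g hj, extendLast_of_notMem g hi] at hf
      exact heq ⟨i, hi⟩ ⟨j, hj⟩ hij
        (by simpa [extendLast_of_notMem g, hi, hj] using hf)

/-- Decomposition of the strict labellings by `m + 1` labels according to the set that carries the
largest label. -/
noncomputable def strictLabelingSuccEquiv (r : α → α → Prop) (m : ℕ) :
    (Σ O : {O : Set α // IsDiscreteOpen r O},
      {g : ↥(O : Set α)ᶜ → Fin m // IsStrictLabeling (Subrel r (· ∈ (O : Set α)ᶜ)) g}) ≃
    {f : α → Fin (m + 1) // IsStrictLabeling r f} :=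
  Equiv.ofBijective
    (fun x ↦ ⟨extendLast x.1 x.2, isStrictLabeling_extendLast_iff.2 ⟨x.1.2, x.2.2⟩⟩) <| by
    constructor
    · rintro ⟨⟨O, hO⟩, g, hg⟩ ⟨⟨O', hO'⟩, g', hg'⟩ h
      have hext : extendLast O g = extendLast O' g' := congrArg Subtype.val h
      obtain rfl : O = O' := by
        rw [← preimage_last_extendLast O g, hext, preimage_last_extendLast]
      obtain rfl : g = g' := extendLast_injective O hext
      rfl
    · rintro ⟨f, hf⟩
      obtain ⟨O, g, rfl⟩ := exists_extendLast_eq f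
      obtain ⟨hO, hg⟩ := isStrictLabeling_extendLast_iff.1 hf
      exact ⟨⟨⟨O, hO⟩, g, hg⟩, rfl⟩

theorem strictLabelingCount_congr {α' : Type*} {s : α' → α' → Prop} (e : r ≃r s) (k : ℕ) :
    strictLabelingCount r k = strictLabelingCount s k :=
  Nat.card_congr
    { toFun := fun f ↦ ⟨f.1 ∘ e.symm, f.2.comp_relEmbedding e.symm.toRelEmbedding⟩
      invFun := fun f ↦ ⟨f.1 ∘ e, f.2.comp_relEmbedding e.toRelEmbedding⟩
      left_inv := fun f ↦ by ext i; simp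
      right_inv := fun f ↦ by ext i; simp }

theorem strictLabelingCount_zero [Nonempty α] (r : α → α → Prop) :
    strictLabelingCount r 0 = 0 := by
  simp [strictLabelingCount]

variable [Fintype α]

open Classical in
theorem strictLabelingCount_succ_eq_sum (r : α → α → Prop) (m : ℕ) :
    strictLabelingCount r (m + 1) =
      ∑ O with IsDiscreteOpen r O, strictLabelingCount (Subrel r (· ∈ Oᶜ)) m := by
  rw [strictLabelingCount, ← Nat.card_congr (strictLabelingSuccEquiv r m), Nat.card_sigma]
  exact (Finset.sum_subtype _ (by simp)
    fun O : Set α ↦ strictLabelingCount (Subrel r (· ∈ Oᶜ)) m).symm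

open Classical in
theorem strictLabelingCount_succ (r : α → α → Prop) (m : ℕ) :
    strictLabelingCount r (m + 1) = strictLabelingCount r m +
      ∑ O with O.Nonempty ∧ IsDiscreteOpen r O, strictLabelingCount (Subrel r (· ∈ Oᶜ)) m := by
  have hempty : strictLabelingCount (Subrel r (· ∈ (∅ : Set α)ᶜ)) m = strictLabelingCount r m :=
    strictLabelingCount_congr (RelIso.subrelUnivIso fun i ↦ Set.notMem_empty i) m
  have herase : ({O | IsDiscreteOpen r O} : Finset (Set α)).erase ∅ =
      ({O | O.Nonempty ∧ IsDiscreteOpen r O} : Finset (Set α)) := by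
    ext O
    simp [Set.nonempty_iff_ne_empty]
  rw [strictLabelingCount_succ_eq_sum, ← hempty, ← herase]
  exact (Finset.add_sum_erase _ (fun O : Set α ↦ strictLabelingCount (Subrel r (· ∈ Oᶜ)) m)
    (by simp [isDiscreteOpen_empty])).symm

open Classical in
theorem strictLabelingCount_eq_sum_range [Nonempty α] (r : α → α → Prop) (m : ℕ) :
    strictLabelingCount r m = ∑ k ∈ Finset.range m,
      ∑ O with O.Nonempty ∧ IsDiscreteOpen r O, strictLabelingCount (Subrel r (· ∈ Oᶜ)) k := by
  induction m with
  | zero => simp [strictLabelingCount_zero]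
  | succ m ih => rw [strictLabelingCount_succ, Finset.sum_range_succ, ← ih]

end

theorem ehr_str_recursive_general {α : Type*} [Finite α] [Nonempty α] (r : α → α → Prop)
    (p : ℚ[X]) (hp : ∀ k : ℕ, p.eval (k : ℚ) = strictLabelingCount r k)
    (E : Set α → ℚ[X])
    (hE : ∀ (B : Set α) (k : ℕ),
      (E B).eval (k : ℚ) = strictLabelingCount (Subrel r (· ∈ B)) k) (m : ℕ) :
    p.eval (m : ℚ) =
      ∑ k ∈ Finset.range m, ∑ᶠ (O : Set α) (_ : O.Nonempty ∧ IsDiscreteOpen r O),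
        (E Oᶜ).eval (k : ℚ) := by
  classical
  have := Fintype.ofFinite α
  rw [hp, strictLabelingCount_eq_sum_range]
  simp only [hE, finsum_eq_if, finsum_eq_sum_of_fintype, Finset.sum_filter, Nat.cast_sum,
    Nat.cast_ite, Nat.cast_zero]

open Classical in
/-- Recursive computation of `ehr^str`: for `m ≥ 1`,
`ehr^str_P(m) = Σ_{k=0}^{m-1} Σ_{∅ ≠ O ∈ top(P), P|O discrete} ehr^str_{P|(Fin n ∖ O)}(k)`. -/
theorem ehr_str_recursive {n : ℕ} (le : Fin n → Fin n → Prop)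
    (hrefl : ∀ i, le i i)
    (htrans : ∀ i j k, le i j → le j k → le i k)
    (hn : 1 ≤ n)
    (p : ℚ[X]) (hp : ∀ k : ℕ, p.eval (k : ℚ) = LstrCount le k)
    (E : Set (Fin n) → ℚ[X])
    (hE : ∀ (B : Set (Fin n)) (k : ℕ), (E B).eval (k : ℚ) = LstrCountOn le B k) :
    ∀ m : ℕ, 1 ≤ m →
      p.eval (m : ℚ) =
        ∑ k ∈ Finset.range m, ∑ᶠ O : Set (Fin n),
          if O.Nonempty ∧ (∀ i ∈ O, ∀ j, le i j → j ∈ O) ∧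
              (∀ i ∈ O, ∀ j ∈ O, le i j → le j i) then
            (E Oᶜ).eval (k : ℚ)
          else 0 := by
  intro m _
  have : Nonempty (Fin n) := ⟨⟨0, hn⟩⟩
  simp only [← finsum_eq_if]
  exact ehr_str_recursive_general le p hp E hE m
end
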